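/- arXiv:2504.00807 — 2 statements merged into one kernel-verified Lean document; each statement's English description precedes it below -/
import Mathlib

section
/- Let T = (V, root, par) be a leafless, narrow rooted directed tree. Then the bounded Cesàro operator C_T on ℓ²(V) is essentially equivalent to a subnormal operator: there exists a compact operator K on ℓ²(V) such that C_T + K is subnormal. -/
noncomputable section

open scoped ENNReal

/-- A rooted directed tree encoded by a vertex set `V`, a root, and a parent map. -/
structure TreeData (V : Type) where
  root : V
  par : V → V
  par_root : par root = root
  hroot : ∀ v : V, ∃ n : ℕ, par^[n] v = root

namespace TreeData

variable {V : Type}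

open scoped Classical in
/-- The depth of a vertex: the least `n` with `par^[n] v = root`. -/
def dep (T : TreeData V) (v : V) : ℕ := Nat.find (T.hroot v)

/-- The Cesàro map `Λ_T`. -/
def cesaro (T : TreeData V) (f : V → ℂ) : V → ℂ := fun v =>
  ((T.dep v : ℂ) + 1)⁻¹ * ∑ j ∈ Finset.range (T.dep v + 1), f (T.par^[j] v)

/-- The `n`-th level `Chi^⟨n⟩(root)`: vertices of depth `n`. -/
def level (T : TreeData V) (n : ℕ) : Set V := {v : V | T.dep v = n}

/-- The set of children of a vertex. -/
def chi (T : TreeData V) (u : V) : Set V := {v : V | v ≠ T.root ∧ T.par v = u}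

end TreeData

/-- The Hilbert space `ℓ²(V)` of square-summable complex functions on `V`. -/
abbrev L2 (V : Type) : Type := lp (fun _ : V => ℂ) 2
/-- A witness to subnormality of a bounded operator `S` on a complex Hilbert space `H`:
a Hilbert space `K`, an isometric embedding `J : H → K`, and a bounded normal operator `N` on
`K` extending `S`. -/
structure SubnormalWitness {H : Type} [NormedAddCommGroup H] [InnerProductSpace ℂ H]
    [CompleteSpace H] (S : H →L[ℂ] H) where
  K : Type
  [grp : NormedAddCommGroup K]
  [ips : InnerProductSpace ℂ K]
  [cpl : CompleteSpace K]
  J : H →ₗᵢ[ℂ] K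
  N : K →L[ℂ] K
  normal : ContinuousLinearMap.adjoint N * N = N * ContinuousLinearMap.adjoint N
  intertwine : ∀ h : H, N (J h) = J (S h)

/-- A bounded operator on a complex Hilbert space is subnormal if it has a normal extension to
a larger Hilbert space. -/
def IsSubnormal {H : Type} [NormedAddCommGroup H] [InnerProductSpace ℂ H] [CompleteSpace H]
    (S : H →L[ℂ] H) : Prop :=
  Nonempty (SubnormalWitness S)

/-!
Let `n` be the depth of `v`. For large `N` the parent map is a bijection between consecutive levels
of depth at least `N`, because the cardinalities of the levels are bounded and eventually
nondecreasing. Let `s v` be the sum of `f` over the strict ancestors of `v` of depth at least `N`.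
Up to an error `O(‖f‖ / (n + 1))`, the function `f - C_T f` agrees at `v` with
  `S f v = √(n / (n + 1)) * f v - s v / √(n * (n + 1))`
(and with `S f v = f v` when `n < N`). As `1 / (n + 1)` is square-summable over a narrow tree, the
difference `1 - C_T - S` is compact. Since `s w = s v + f v` for the unique child `w` of `v`,
  `|S f v|² = |f v|² + |s v|² / n - |s w|² / (n + 1)`,
and summing over the levels telescopes: `S` is an isometry. An isometry has a unitary (Halmos)
dilation, so it is subnormal, and so is `1 - S`, a compact perturbation of `C_T`.
-/

section Truncation

open Filter Topology

variable {α : Type*} {E : α → Type*} {p : ℝ≥0∞} [Fact (1 ≤ p)] [∀ i, NormedAddCommGroup (E i)]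
variable (𝕜 : Type*) [NontriviallyNormedField 𝕜] [∀ i, NormedSpace 𝕜 (E i)]

open scoped Classical in
/-- The coordinate projection of `ℓ^p` onto the sequences supported in the finite set `s`. -/
def lpTruncation (s : Finset α) : lp E p →L[𝕜] lp E p :=
  ∑ i ∈ s, lp.singleContinuousLinearMap 𝕜 E p i ∘L lp.evalCLM 𝕜 E p i

open scoped Classical in
theorem lpTruncation_eq_sum_single (s : Finset α) (f : lp E p) :
    lpTruncation 𝕜 s f = ∑ i ∈ s, lp.single p i (f i) := by
  simp only [lpTruncation, sum_apply, ContinuousLinearMap.comp_apply]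
  rfl

open scoped Classical in
theorem lpTruncation_apply (s : Finset α) (f : lp E p) (i : α) :
    lpTruncation 𝕜 s f i = if i ∈ s then f i else 0 := by
  rw [lpTruncation_eq_sum_single, lp.coeFn_sum, Finset.sum_apply]
  simp [lp.single_apply]

theorem tendsto_lpTruncation (hp : p ≠ ∞) (f : lp E p) :
    Tendsto (fun s => lpTruncation 𝕜 s f) atTop (𝓝 f) := by
  classical
  simpa only [lpTruncation_eq_sum_single] using! lp.hasSum_single hp f

theorem isCompactOperator_lpTruncation [∀ i, LocallyCompactSpace (E i)] (s : Finset α) :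
    IsCompactOperator (lpTruncation 𝕜 s : lp E p →L[𝕜] lp E p) := by
  classical
  refine Submodule.sum_mem (compactOperator (RingHom.id 𝕜) (lp E p) (lp E p)) fun i _ => ?_
  exact (isCompactOperator_id.comp_clm (lp.evalCLM 𝕜 E p i)).clm_comp
    (lp.singleContinuousLinearMap 𝕜 E p i)

end Truncation

section DominatedOperator

open Filter

variable {α : Type*} {E : α → Type*} {p : ℝ≥0∞} [Fact (1 ≤ p)] [∀ i, NormedAddCommGroup (E i)]

theorem lp_norm_le_mul_norm {f : lp E p} {w : lp (fun _ : α => ℝ) p} {c : ℝ} (hc : 0 ≤ c)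
    (h : ∀ i, ‖f i‖ ≤ c * ‖w i‖) : ‖f‖ ≤ c * ‖w‖ := by
  have hp : p ≠ 0 := (zero_lt_one.trans_le Fact.out).ne'
  calc ‖f‖ ≤ ‖c • w‖ := lp.norm_mono hp fun i => by
        simpa [norm_smul, abs_of_nonneg hc] using h i
    _ = c * ‖w‖ := by rw [norm_smul, Real.norm_of_nonneg hc]

variable {𝕜 X : Type*} [NontriviallyNormedField 𝕜] [∀ i, NormedSpace 𝕜 (E i)]
  [SeminormedAddCommGroup X] [NormedSpace 𝕜 X]

theorem isCompactOperator_of_norm_apply_le [∀ i, ProperSpace (E i)] (hp : p ≠ ∞)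
    (K : X →L[𝕜] lp E p) (w : lp (fun _ : α => ℝ) p) (hK : ∀ x i, ‖K x i‖ ≤ ‖x‖ * ‖w i‖) :
    IsCompactOperator K := by
  classical
  have hbound (s : Finset α) : ‖lpTruncation 𝕜 s ∘L K - K‖ ≤ ‖lpTruncation ℝ s w - w‖ := by
    refine ContinuousLinearMap.opNorm_le_bound _ (norm_nonneg _) fun x => ?_
    rw [mul_comm]
    refine lp_norm_le_mul_norm (norm_nonneg x) fun i => ?_
    simp only [sub_apply, ContinuousLinearMap.comp_apply, lp.coeFn_sub, Pi.sub_apply,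
      lpTruncation_apply]
    split_ifs
    · simp
    · simpa using hK x i
  refine isCompactOperator_of_tendsto (F := fun s => lpTruncation 𝕜 s ∘L K) (l := atTop) ?_
    (.of_forall fun s => (isCompactOperator_lpTruncation 𝕜 s).comp_clm K)
  rw [tendsto_iff_norm_sub_tendsto_zero]
  exact squeeze_zero (fun _ => norm_nonneg _) hbound
    (tendsto_iff_norm_sub_tendsto_zero.1 (tendsto_lpTruncation ℝ hp w))

theorem exists_isCompactOperator_lp [∀ i, ProperSpace (E i)] (hp : p ≠ ∞)
    (k : X →ₗ[𝕜] ∀ i, E i) {w : α → ℝ} (hw : Memℓp w p) (hk : ∀ x i, ‖k x i‖ ≤ ‖x‖ * ‖w i‖) :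
    ∃ K : X →L[𝕜] lp E p, IsCompactOperator K ∧ ∀ x i, K x i = k x i := by
  have hmem (x : X) : Memℓp (k x) p :=
    (hw.const_mul ‖x‖).mono' fun i => by simpa using hk x i
  let Kₗ : X →ₗ[𝕜] lp E p :=
    { toFun := fun x => ⟨k x, hmem x⟩
      map_add' := fun x y => lp.ext (k.map_add x y)
      map_smul' := fun c x => lp.ext (k.map_smul c x) }
  let w' : lp (fun _ : α => ℝ) p := ⟨w, hw⟩
  let K : X →L[𝕜] lp E p := Kₗ.mkContinuous ‖w'‖ fun x => by
    rw [mul_comm]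
    exact lp_norm_le_mul_norm (norm_nonneg x) (hk x)
  exact ⟨K, isCompactOperator_of_norm_apply_le hp K w' hk, fun _ _ => rfl⟩

end DominatedOperator

section BlockOperator

open ContinuousLinearMap

variable {𝕜 E F : Type*} [RCLike 𝕜] [NormedAddCommGroup E] [InnerProductSpace 𝕜 E]
  [NormedAddCommGroup F] [InnerProductSpace 𝕜 F]

/-- The operator on the Hilbert sum `E ⊕ F` given by the `2 × 2` operator matrix
`[[A, B], [C, D]]`. -/
def blockOperator (A : E →L[𝕜] E) (B : F →L[𝕜] E) (C : E →L[𝕜] F) (D : F →L[𝕜] F) :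
    WithLp 2 (E × F) →L[𝕜] WithLp 2 (E × F) :=
  (WithLp.prodContinuousLinearEquiv 2 𝕜 E F).symm.toContinuousLinearMap ∘L
    (A.coprod B).prod (C.coprod D) ∘L
      (WithLp.prodContinuousLinearEquiv 2 𝕜 E F).toContinuousLinearMap

theorem blockOperator_apply (A : E →L[𝕜] E) (B : F →L[𝕜] E) (C : E →L[𝕜] F) (D : F →L[𝕜] F)
    (x : WithLp 2 (E × F)) :
    blockOperator A B C D x = WithLp.toLp 2 (A x.fst + B x.snd, C x.fst + D x.snd) :=
  rfl

theorem blockOperator_one : blockOperator (1 : E →L[𝕜] E) 0 0 (1 : F →L[𝕜] F) = 1 := by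
  ext1 x
  simp only [blockOperator_apply, one_apply_eq_self, zero_apply, add_zero, zero_add]
  rfl

theorem blockOperator_mul (A A' : E →L[𝕜] E) (B B' : F →L[𝕜] E) (C C' : E →L[𝕜] F)
    (D D' : F →L[𝕜] F) :
    blockOperator A B C D * blockOperator A' B' C' D' =
      blockOperator (A ∘L A' + B ∘L C') (A ∘L B' + B ∘L D') (C ∘L A' + D ∘L C')
        (C ∘L B' + D ∘L D') := by
  ext1 x
  simp [blockOperator_apply, add_add_add_comm]

theorem adjoint_blockOperator [CompleteSpace E] [CompleteSpace F] (A : E →L[𝕜] E)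
    (B : F →L[𝕜] E) (C : E →L[𝕜] F) (D : F →L[𝕜] F) :
    adjoint (blockOperator A B C D) =
      blockOperator (adjoint A) (adjoint C) (adjoint B) (adjoint D) := by
  symm
  rw [eq_adjoint_iff]
  intro x y
  simp only [blockOperator_apply, WithLp.prod_inner_apply, inner_add_left, inner_add_right,
    adjoint_inner_left, WithLp.ofLp_fst, WithLp.ofLp_snd]
  ring

variable [CompleteSpace E]

/-- The Halmos matrix `[[S, 1 - S S*], [0, S*]]`, a unitary extension of `S` to `E ⊕ E` when `S` is
an isometry. -/
def halmosDilation (S : E →L[𝕜] E) : WithLp 2 (E × E) →L[𝕜] WithLp 2 (E × E) :=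
  blockOperator S (1 - S * adjoint S) 0 (adjoint S)

theorem halmosDilation_mem_unitary {S : E →L[𝕜] E} (hS : adjoint S * S = 1) :
    halmosDilation S ∈ unitary (WithLp 2 (E × E) →L[𝕜] WithLp 2 (E × E)) := by
  have hS' : star S * S = 1 := hS
  have hstar : adjoint (halmosDilation S) =
      blockOperator (star S) 0 (1 - S * star S) S := by
    rw [halmosDilation, adjoint_blockOperator]
    simp [← star_eq_adjoint]
  have hleft : star S * (1 - S * star S) = 0 := by
    rw [mul_sub, ← mul_assoc, hS', mul_one, one_mul, sub_self]
  have hright : (1 - S * star S) * S = 0 := by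
    rw [sub_mul, mul_assoc, hS', mul_one, one_mul, sub_self]
  rw [Unitary.mem_iff, star_eq_adjoint, hstar, halmosDilation, blockOperator_mul,
    blockOperator_mul, ← blockOperator_one]
  simp only [← mul_def, ← star_eq_adjoint]
  constructor <;> congr 1 <;> simp [hS', hleft, hright, mul_sub, ← mul_assoc]

end BlockOperator

section Subnormal

open ContinuousLinearMap

variable {H : Type} [NormedAddCommGroup H] [InnerProductSpace ℂ H] [CompleteSpace H]

theorem isSubnormal_of_norm_map {S : H →L[ℂ] H} (hS : ∀ x, ‖S x‖ = ‖x‖) : IsSubnormal S := by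
  have hunit := Unitary.mem_iff.1
    (halmosDilation_mem_unitary ((norm_map_iff_adjoint_comp_self S).1 hS))
  exact ⟨{
    K := WithLp 2 (H × H)
    J :=
      { toLinearMap := (WithLp.linearEquiv 2 ℂ (H × H)).symm.toLinearMap ∘ₗ LinearMap.inl ℂ H H
        norm_map' := fun x => by simp }
    N := halmosDilation S
    normal := hunit.1.trans hunit.2.symm
    intertwine := fun h => by simp [halmosDilation, blockOperator_apply] }⟩

theorem IsSubnormal.one_sub {S : H →L[ℂ] H} (hS : IsSubnormal S) : IsSubnormal (1 - S) := by
  obtain ⟨K, J, N, normal, intertwine⟩ := hS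
  have : IsStarNormal N := ⟨normal⟩
  exact ⟨⟨K, J, 1 - N, star_comm_self' (1 - N), fun h => by simp [intertwine]⟩⟩

end Subnormal

section Estimates

theorem norm_sum_range_le {F : Type*} [SeminormedAddCommGroup F] {a : ℕ → F} {B : ℝ}
    (ha : ∀ j, ‖a j‖ ≤ B) (k : ℕ) : ‖∑ j ∈ Finset.range k, a j‖ ≤ k * B := by
  simpa using norm_sum_le_of_le (Finset.range k) fun j _ => ha j

theorem norm_natCast_add_one_inv {𝕜 : Type*} [RCLike 𝕜] (n : ℕ) :
    ‖((n : 𝕜) + 1)⁻¹‖ = ((n : ℝ) + 1)⁻¹ := by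
  rw [norm_inv, ← Nat.cast_succ, RCLike.norm_natCast, Nat.cast_succ]

variable {x : ℝ}

theorem norm_sqrt_smul_sub_smul_sq {F : Type*} [NormedAddCommGroup F] [InnerProductSpace ℝ F]
    (hx : 0 < x) (a b : F) :
    ‖√(x / (x + 1)) • a - (√(x * (x + 1)))⁻¹ • b‖ ^ 2 =
      ‖a‖ ^ 2 + ‖b‖ ^ 2 / x - ‖b + a‖ ^ 2 / (x + 1) := by
  have hcross : √(x / (x + 1)) * (√(x * (x + 1)))⁻¹ = (x + 1)⁻¹ := by
    rw [← Real.sqrt_inv, ← Real.sqrt_mul (by positivity),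
      show x / (x + 1) * (x * (x + 1))⁻¹ = ((x + 1)⁻¹) ^ 2 by field_simp,
      Real.sqrt_sq (by positivity)]
  calc ‖√(x / (x + 1)) • a - (√(x * (x + 1)))⁻¹ • b‖ ^ 2
      = √(x / (x + 1)) ^ 2 * ‖a‖ ^ 2 +
          (√(x * (x + 1)) ^ 2)⁻¹ * ‖b‖ ^ 2 -
            2 * (√(x / (x + 1)) * (√(x * (x + 1)))⁻¹) * inner ℝ b a := by
        rw [norm_sub_sq_real, norm_smul, norm_smul, mul_pow, mul_pow, Real.norm_eq_abs,
          Real.norm_eq_abs, sq_abs, sq_abs, inv_pow, real_inner_smul_left, real_inner_smul_right,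
          real_inner_comm]
        ring
    _ = x / (x + 1) * ‖a‖ ^ 2 + (x * (x + 1))⁻¹ * ‖b‖ ^ 2 - 2 * (x + 1)⁻¹ * inner ℝ b a := by
        rw [hcross, Real.sq_sqrt (by positivity), Real.sq_sqrt (by positivity)]
    _ = ‖a‖ ^ 2 + ‖b‖ ^ 2 / x - ‖b + a‖ ^ 2 / (x + 1) := by
        rw [norm_add_sq_real]
        field_simp
        ring

theorem abs_one_sub_sqrt_div_sub_inv_le (hx : 0 ≤ x) :
    |1 - √(x / (x + 1)) - (x + 1)⁻¹| ≤ (x + 1)⁻¹ := by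
  have hdiv : x / (x + 1) = 1 - (x + 1)⁻¹ := by field_simp; ring
  have hpos : 0 < (x + 1)⁻¹ := by positivity
  have hone : √(x / (x + 1)) ≤ 1 := Real.sqrt_le_one.2 (by linarith)
  have hself : x / (x + 1) ≤ √(x / (x + 1)) :=
    Real.le_sqrt_of_sq_le (pow_le_of_le_one (by positivity) (by linarith) two_ne_zero)
  rw [abs_le]
  constructor <;> linarith

theorem abs_inv_sqrt_mul_sub_inv_le (hx : 0 < x) :
    |(√(x * (x + 1)))⁻¹ - (x + 1)⁻¹| ≤ x⁻¹ * (x + 1)⁻¹ := by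
  have hupper : (√(x * (x + 1)))⁻¹ ≤ x⁻¹ :=
    inv_anti₀ hx (Real.le_sqrt_of_sq_le (by nlinarith))
  have hlower : (x + 1)⁻¹ ≤ (√(x * (x + 1)))⁻¹ :=
    inv_anti₀ (by positivity) ((Real.sqrt_le_left (by positivity)).2 (by nlinarith))
  have hdiff : x⁻¹ * (x + 1)⁻¹ = x⁻¹ - (x + 1)⁻¹ := by field_simp; ring
  rw [abs_of_nonneg (sub_nonneg.2 hlower), hdiff]
  exact sub_le_sub_right hupper _

end Estimates

theorem summable_comp_of_encard_preimage_le {α β : Type*} {g : α → β} {F : β → ℝ} {m : ℕ}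
    (hg : ∀ b, (g ⁻¹' {b}).encard ≤ m) (hF : Summable F) (hF0 : ∀ b, 0 ≤ F b) :
    Summable (F ∘ g) := by
  have hfin (b : β) : Finite {a // g a = b} := (Set.finite_of_encard_le_coe (hg b)).to_subtype
  have hcard (b : β) : Nat.card {a // g a = b} ≤ m :=
    ENat.toNat_le_of_le_natCast (hg b)
  refine (Equiv.sigmaFiberEquiv g).summable_iff.1
    ((summable_sigma_of_nonneg fun _ => hF0 _).2 ⟨fun b => .of_finite, ?_⟩)
  refine .of_nonneg_of_le (fun b => tsum_nonneg fun _ => hF0 _) (fun b => ?_) (hF.mul_left (m : ℝ))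
  calc ∑' a : {a // g a = b}, F (g a) = ∑' _ : {a // g a = b}, F b :=
        tsum_congr fun a => by rw [a.2]
    _ = Nat.card {a // g a = b} * F b := by rw [tsum_const, nsmul_eq_mul]
    _ ≤ m * F b := by have := hF0 b; gcongr; exact hcard b

namespace TreeData

open Filter Set Topology

variable {V : Type} (T : TreeData V)

section Depth

theorem iterate_par_dep (v : V) : T.par^[T.dep v] v = T.root := by
  classical
  exact Nat.find_spec (T.hroot v)

variable {T}

theorem dep_le {v : V} {n : ℕ} (h : T.par^[n] v = T.root) : T.dep v ≤ n := by
  classical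
  exact Nat.find_min' (T.hroot v) h

theorem dep_root : T.dep T.root = 0 :=
  Nat.le_zero.1 (dep_le rfl)

theorem dep_eq_dep_par_add_one {v : V} (hv : v ≠ T.root) : T.dep v = T.dep (T.par v) + 1 := by
  refine le_antisymm (dep_le (T.iterate_par_dep (T.par v))) ?_
  have hiter := T.iterate_par_dep v
  cases hd : T.dep v with
  | zero => exact absurd (by simpa [hd] using hiter) hv
  | succ k =>
    rw [hd, Function.iterate_succ_apply] at hiter
    exact Nat.succ_le_succ (dep_le hiter)

theorem mapsTo_par_level (n : ℕ) : MapsTo T.par (T.level (n + 1)) (T.level n) := by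
  intro v (hv : T.dep v = n + 1)
  have hroot : v ≠ T.root := by
    rintro rfl
    simp [dep_root] at hv
  exact Nat.succ_injective ((dep_eq_dep_par_add_one hroot).symm.trans hv)

theorem surjOn_par_level {n : ℕ} (h : ∀ u ∈ T.level n, (T.chi u).Nonempty) :
    SurjOn T.par (T.level (n + 1)) (T.level n) := by
  intro u hu
  obtain ⟨v, hroot, rfl⟩ := h u hu
  exact ⟨v, (dep_eq_dep_par_add_one hroot).trans (congrArg (· + 1) hu), rfl⟩

theorem finite_level {m : ℕ} (hm : ∀ n, (T.level n).encard ≤ m) (n : ℕ) : (T.level n).Finite :=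
  finite_of_encard_le_coe (hm n)

theorem eventually_surjOn_par (hleaves : {u | T.chi u = ∅}.Finite) :
    ∀ᶠ n in atTop, SurjOn T.par (T.level (n + 1)) (T.level n) := by
  obtain ⟨D, hD⟩ := (hleaves.image T.dep).bddAbove
  filter_upwards [eventually_gt_atTop D] with n hn
  refine surjOn_par_level fun u hu => nonempty_iff_ne_empty.2 fun hleaf => ?_
  have hle : T.dep u ≤ D := hD (mem_image_of_mem _ hleaf)
  exact (hu ▸ hle).not_gt hn

theorem eventually_bijOn_par (hleaves : {u | T.chi u = ∅}.Finite) {m : ℕ}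
    (hm : ∀ n, (T.level n).encard ≤ m) :
    ∀ᶠ n in atTop, BijOn T.par (T.level (n + 1)) (T.level n) := by
  obtain ⟨D, hD⟩ := eventually_atTop.1 (eventually_surjOn_par hleaves)
  have hmono : Monotone fun k => (T.level (D + k)).ncard := monotone_nat_of_le_succ fun k => by
    rw [← (hD (D + k) (Nat.le_add_right D k)).image_eq_of_mapsTo (mapsTo_par_level _)]
    exact ncard_image_le (finite_level hm _)
  have hbdd : BddAbove (range fun k => (T.level (D + k)).ncard) :=
    ⟨m, forall_mem_range.2 fun k => ENat.toNat_le_of_le_natCast (hm _)⟩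
  obtain ⟨k₀, hk₀⟩ : ∃ k₀, ∀ k ≥ k₀, (T.level (D + k)).ncard = ⨆ k, (T.level (D + k)).ncard := by
    simpa [nhds_discrete] using tendsto_atTop_ciSup hmono hbdd
  filter_upwards [eventually_ge_atTop (D + k₀)] with n hn
  obtain ⟨k, rfl⟩ := Nat.exists_eq_add_of_le (le_of_add_le_left hn)
  have himage := (hD (D + k) (by omega)).image_eq_of_mapsTo (mapsTo_par_level _)
  refine BijOn.mk (mapsTo_par_level _) (injOn_of_ncard_image_eq ?_ (finite_level hm _))
    (hD _ (by omega))
  rw [himage, hk₀ k (by omega), add_assoc, hk₀ (k + 1) (by omega)]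

end Depth

section LevelEnergy

/-- The energy `∑ |f v|²` of `f` on the `n`-th level of the tree (junk value `0` if the sum
diverges). -/
def levelEnergy (f : V → ℂ) (n : ℕ) : ℝ :=
  ∑' v : T.level n, ‖f v‖ ^ 2

theorem tendsto_sum_levelEnergy (f : L2 V) :
    Tendsto (fun M => ∑ n ∈ Finset.range M, T.levelEnergy f n) atTop (𝓝 (‖f‖ ^ 2)) := by
  have hnorm : HasSum (fun v => ‖f v‖ ^ 2) (‖f‖ ^ 2) := by
    simpa using lp.hasSum_norm (p := 2) (by norm_num) f
  exact (hnorm.tsum_fiberwise T.dep).tendsto_sum_nat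

variable {T}

theorem levelEnergy_congr {f g : V → ℂ} {n : ℕ} (h : ∀ v ∈ T.level n, ‖f v‖ = ‖g v‖) :
    T.levelEnergy f n = T.levelEnergy g n :=
  tsum_congr fun v => by rw [h v v.2]

theorem levelEnergy_comp_par {n : ℕ} (h : BijOn T.par (T.level (n + 1)) (T.level n))
    (f : V → ℂ) : T.levelEnergy (f ∘ T.par) (n + 1) = T.levelEnergy f n :=
  (BijOn.equiv T.par h).tsum_eq fun v => ‖f v‖ ^ 2

end LevelEnergy

section AncestorSum

/-- The sum of `f` over the strict ancestors of `v` of depth at least `N`. -/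
def ancestorSum (N : ℕ) : (V → ℂ) →ₗ[ℂ] V → ℂ :=
  LinearMap.pi fun v => ∑ j ∈ Finset.range (T.dep v - N), LinearMap.proj (T.par^[j + 1] v)

theorem ancestorSum_apply (N : ℕ) (f : V → ℂ) (v : V) :
    T.ancestorSum N f v = ∑ j ∈ Finset.range (T.dep v - N), f (T.par^[j + 1] v) := by
  simp [ancestorSum]

variable {T} {N n : ℕ} {v : V} (f : V → ℂ)

theorem ancestorSum_eq_zero (hv : T.dep v ≤ N) : T.ancestorSum N f v = 0 := by
  simp [ancestorSum_apply, Nat.sub_eq_zero_of_le hv]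

theorem ancestorSum_eq_par (hv : v ∈ T.level (n + 1)) (hn : N ≤ n) :
    T.ancestorSum N f v = (T.ancestorSum N f + f) (T.par v) := by
  have hpar : T.dep (T.par v) = n := mapsTo_par_level n hv
  rw [Pi.add_apply, ancestorSum_apply, ancestorSum_apply, hpar, show T.dep v = n + 1 from hv,
    Nat.succ_sub hn, Finset.sum_range_succ']
  rfl

theorem sum_iterate_par_eq_add_ancestorSum (hN : N ≤ T.dep v) :
    ∑ j ∈ Finset.range (T.dep v + 1), f (T.par^[j] v) =
      f v + T.ancestorSum N f v +
        ∑ j ∈ Finset.range N, f (T.par^[T.dep v - N + 1 + j] v) := by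
  rw [show T.dep v + 1 = T.dep v - N + 1 + N by omega, Finset.sum_range_add,
    Finset.sum_range_succ', ancestorSum_apply, add_comm (f v)]
  rfl

theorem norm_ancestorSum_le {B : ℝ} (hB : ∀ v, ‖f v‖ ≤ B) :
    ‖T.ancestorSum N f v‖ ≤ T.dep v * B := by
  have hB0 : 0 ≤ B := (norm_nonneg _).trans (hB v)
  rw [ancestorSum_apply]
  refine (norm_sum_range_le (fun _ => hB _) _).trans ?_
  gcongr
  exact Nat.sub_le _ _

theorem levelEnergy_ancestorSum_succ (h : BijOn T.par (T.level (n + 1)) (T.level n))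
    (hn : N ≤ n) :
    T.levelEnergy (T.ancestorSum N f) (n + 1) = T.levelEnergy (T.ancestorSum N f + f) n := by
  rw [← levelEnergy_comp_par h]
  exact levelEnergy_congr fun v hv => by rw [ancestorSum_eq_par f hv hn, Function.comp_apply]

theorem levelEnergy_ancestorSum_eq_zero (hn : n ≤ N) :
    T.levelEnergy (T.ancestorSum N f) n = 0 := by
  have hzero (v : T.level n) : T.ancestorSum N f v = 0 :=
    ancestorSum_eq_zero f (v.2.trans_le hn)
  simp [levelEnergy, hzero]

variable {f}

theorem tendsto_levelEnergy_ancestorSum_div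
    (hbij : ∀ n ≥ N, BijOn T.par (T.level (n + 1)) (T.level n)) (hf : f.support.Finite) :
    Tendsto (fun n : ℕ => T.levelEnergy (T.ancestorSum N f) n / n) atTop (𝓝 0) := by
  obtain ⟨D, hD⟩ := (hf.image T.dep).bddAbove
  have hvanish {v : V} (hv : D < T.dep v) : f v = 0 :=
    by_contra fun hne => (hD (mem_image_of_mem _ hne)).not_gt hv
  have hstep (n : ℕ) (hn : max N (D + 1) ≤ n) :
      T.levelEnergy (T.ancestorSum N f) (n + 1) = T.levelEnergy (T.ancestorSum N f) n := by
    rw [levelEnergy_ancestorSum_succ f (hbij n (le_of_max_le_left hn)) (le_of_max_le_left hn)]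
    refine levelEnergy_congr fun v (hv : T.dep v = n) => ?_
    rw [Pi.add_apply, hvanish (by omega), add_zero]
  have hconst : ∀ n ≥ max N (D + 1), T.levelEnergy (T.ancestorSum N f) n =
      T.levelEnergy (T.ancestorSum N f) (max N (D + 1)) := fun n hn => by
    induction n, hn using Nat.le_induction with
    | base => rfl
    | succ n hn ih => rw [hstep n hn, ih]
  refine (tendsto_const_div_atTop_nhds_zero_nat
    (T.levelEnergy (T.ancestorSum N f) (max N (D + 1)))).congr' ?_
  filter_upwards [eventually_ge_atTop (max N (D + 1))] with n hn
  rw [hconst n hn]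

end AncestorSum

section IsometricModel

/-- The operator `f ↦ (v ↦ √(n/(n+1)) f(v) - s(v)/√(n(n+1)))`, with `n = dep v` and
`s = ancestorSum N f`, acting as the identity at depths below `N`. It is the isometry to which
`1 - C_T` is compared. -/
def isometricModel (N : ℕ) : (V → ℂ) →ₗ[ℂ] V → ℂ :=
  LinearMap.pi fun v =>
    if N ≤ T.dep v then
      √(T.dep v / (T.dep v + 1)) • LinearMap.proj v -
        (√(T.dep v * (T.dep v + 1)))⁻¹ • LinearMap.proj v ∘ₗ T.ancestorSum N
    else LinearMap.proj v

variable {T} {N : ℕ} {v : V} (f : V → ℂ)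

theorem isometricModel_of_le (h : N ≤ T.dep v) :
    T.isometricModel N f v = √(T.dep v / (T.dep v + 1)) • f v -
      (√(T.dep v * (T.dep v + 1)))⁻¹ • T.ancestorSum N f v := by
  simp [isometricModel, h]

theorem isometricModel_of_lt (h : T.dep v < N) : T.isometricModel N f v = f v := by
  simp [isometricModel, h.not_ge]

theorem levelEnergy_isometricModel (hN : 0 < N)
    (hbij : ∀ n ≥ N, BijOn T.par (T.level (n + 1)) (T.level n)) (hfin : ∀ n, (T.level n).Finite)
    (n : ℕ) :
    T.levelEnergy (T.isometricModel N f) n = T.levelEnergy f n +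
      T.levelEnergy (T.ancestorSum N f) n / n -
        T.levelEnergy (T.ancestorSum N f) (n + 1) / (n + 1 : ℕ) := by
  obtain hn | hn := lt_or_ge n N
  · rw [levelEnergy_ancestorSum_eq_zero f hn.le, levelEnergy_ancestorSum_eq_zero f hn, zero_div,
      zero_div, add_zero, sub_zero]
    exact levelEnergy_congr fun v hv => by rw [isometricModel_of_lt f (hv.trans_lt hn)]
  · rw [levelEnergy_ancestorSum_succ f (hbij n hn) hn]
    have := (hfin n).to_subtype
    have hn0 : (0 : ℝ) < n := Nat.cast_pos.2 (hN.trans_le hn)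
    simp only [levelEnergy, ← tsum_div_const]
    rw [← Summable.tsum_add .of_finite .of_finite, ← Summable.tsum_sub .of_finite .of_finite]
    refine tsum_congr fun ⟨v, (hv : T.dep v = n)⟩ => ?_
    rw [isometricModel_of_le f (hn.trans_eq hv.symm), hv, norm_sqrt_smul_sub_smul_sq hn0,
      Nat.cast_succ, Pi.add_apply]

theorem sum_levelEnergy_isometricModel (hN : 0 < N)
    (hbij : ∀ n ≥ N, BijOn T.par (T.level (n + 1)) (T.level n)) (hfin : ∀ n, (T.level n).Finite)
    (M : ℕ) :
    ∑ n ∈ Finset.range M, T.levelEnergy (T.isometricModel N f) n =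
      ∑ n ∈ Finset.range M, T.levelEnergy f n - T.levelEnergy (T.ancestorSum N f) M / M := by
  simp only [levelEnergy_isometricModel f hN hbij hfin, add_sub_assoc, Finset.sum_add_distrib]
  rw [Finset.sum_range_sub' fun n => T.levelEnergy (T.ancestorSum N f) n / n]
  simp [sub_eq_add_neg]

theorem norm_map_of_eq_isometricModel_of_finite_support (hN : 0 < N)
    (hbij : ∀ n ≥ N, BijOn T.par (T.level (n + 1)) (T.level n)) (hfin : ∀ n, (T.level n).Finite)
    {S : L2 V →L[ℂ] L2 V} (hS : ∀ f v, S f v = T.isometricModel N f v) {f : L2 V}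
    (hf : (Function.support f).Finite) : ‖S f‖ = ‖f‖ := by
  have hlim := (T.tendsto_sum_levelEnergy f).sub (tendsto_levelEnergy_ancestorSum_div hbij hf)
  have hSf : ⇑(S f) = T.isometricModel N f := funext (hS f)
  simp only [← sum_levelEnergy_isometricModel _ hN hbij hfin, ← hSf, sub_zero] at hlim
  exact (sq_eq_sq₀ (norm_nonneg _) (norm_nonneg _)).1
    (tendsto_nhds_unique (T.tendsto_sum_levelEnergy (S f)) hlim)

theorem norm_map_of_eq_isometricModel (hN : 0 < N)
    (hbij : ∀ n ≥ N, BijOn T.par (T.level (n + 1)) (T.level n)) (hfin : ∀ n, (T.level n).Finite)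
    {S : L2 V →L[ℂ] L2 V} (hS : ∀ f v, S f v = T.isometricModel N f v) (f : L2 V) :
    ‖S f‖ = ‖f‖ := by
  have hclosed : IsClosed {g : L2 V | ‖S g‖ = ‖g‖} := isClosed_eq (by fun_prop) (by fun_prop)
  refine hclosed.mem_of_tendsto (tendsto_lpTruncation ℂ (by norm_num) f) (.of_forall fun s => ?_)
  refine norm_map_of_eq_isometricModel_of_finite_support hN hbij hfin hS
    (s.finite_toSet.subset fun v hv => ?_)
  by_contra hvs
  exact hv ((lpTruncation_apply ℂ s f v).trans (if_neg hvs))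

end IsometricModel

section Cesaro

/-- The Cesàro map `Λ_T`, bundled as a linear map. -/
def cesaroLinearMap : (V → ℂ) →ₗ[ℂ] V → ℂ :=
  LinearMap.pi fun v =>
    ((T.dep v : ℂ) + 1)⁻¹ • ∑ j ∈ Finset.range (T.dep v + 1), LinearMap.proj (T.par^[j] v)

theorem cesaroLinearMap_apply (f : V → ℂ) (v : V) : T.cesaroLinearMap f v = T.cesaro f v := by
  simp [cesaroLinearMap, cesaro]

/-- The operator `1 - Λ_T - S`, where `S` is the isometric model of `1 - Λ_T`. -/
def modelDefect (N : ℕ) : (V → ℂ) →ₗ[ℂ] V → ℂ :=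
  LinearMap.id - T.cesaroLinearMap - T.isometricModel N

theorem modelDefect_apply (N : ℕ) (f : V → ℂ) (v : V) :
    T.modelDefect N f v = f v - T.cesaro f v - T.isometricModel N f v := by
  simp [modelDefect, cesaroLinearMap_apply]

theorem memℓp_inv_dep_add_one {m : ℕ} (hm : ∀ n, (T.level n).encard ≤ m) :
    Memℓp (fun v => ((T.dep v : ℝ) + 1)⁻¹) 2 := by
  have hsum : Summable fun n : ℕ => (((n : ℝ) + 1)⁻¹) ^ 2 := by
    simpa using (summable_nat_add_iff 1).2 (Real.summable_nat_pow_inv.2 one_lt_two)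
  refine memℓp_gen ?_
  simpa [Function.comp_def] using
    summable_comp_of_encard_preimage_le (g := T.dep) hm hsum fun n => by positivity

variable {T} {N : ℕ} {v : V} {f : V → ℂ} {B : ℝ}

theorem norm_modelDefect_le_of_lt (hB : ∀ v, ‖f v‖ ≤ B) (hv : T.dep v < N) :
    ‖T.modelDefect N f v‖ ≤ B * (N * ((T.dep v : ℝ) + 1)⁻¹) := by
  have hB0 : 0 ≤ B := (norm_nonneg _).trans (hB v)
  have hsum : ‖∑ j ∈ Finset.range (T.dep v + 1), f (T.par^[j] v)‖ ≤ N * B := by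
    refine (norm_sum_range_le (fun _ => hB _) _).trans ?_
    gcongr
    exact hv
  calc ‖T.modelDefect N f v‖
      = ((T.dep v : ℝ) + 1)⁻¹ * ‖∑ j ∈ Finset.range (T.dep v + 1), f (T.par^[j] v)‖ := by
        rw [modelDefect_apply, isometricModel_of_lt f hv, sub_sub_cancel_left, norm_neg, cesaro,
          norm_mul, norm_natCast_add_one_inv]
    _ ≤ ((T.dep v : ℝ) + 1)⁻¹ * (N * B) := by gcongr
    _ = B * (N * ((T.dep v : ℝ) + 1)⁻¹) := by ring

theorem norm_modelDefect_le_of_le (hN : 0 < N) (hB : ∀ v, ‖f v‖ ≤ B) (hv : N ≤ T.dep v) :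
    ‖T.modelDefect N f v‖ ≤ B * ((N + 2) * ((T.dep v : ℝ) + 1)⁻¹) := by
  have hn0 : (0 : ℝ) < T.dep v := Nat.cast_pos.2 (hN.trans_le hv)
  have hs : ‖T.ancestorSum N f v‖ ≤ T.dep v * B := norm_ancestorSum_le f hB
  set r := ∑ j ∈ Finset.range N, f (T.par^[T.dep v - N + 1 + j] v) with hr_def
  have hr : ‖r‖ ≤ N * B := norm_sum_range_le (fun _ => hB _) _
  have hdecomp : T.modelDefect N f v =
      (1 - √(T.dep v / (T.dep v + 1)) - ((T.dep v : ℝ) + 1)⁻¹) • f v +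
        ((√(T.dep v * (T.dep v + 1)))⁻¹ - ((T.dep v : ℝ) + 1)⁻¹) • T.ancestorSum N f v -
          ((T.dep v : ℂ) + 1)⁻¹ * r := by
    rw [modelDefect_apply, isometricModel_of_le f hv, cesaro,
      sum_iterate_par_eq_add_ancestorSum f hv, ← hr_def]
    simp only [Complex.real_smul]
    push_cast
    ring
  calc ‖T.modelDefect N f v‖
      ≤ ((T.dep v : ℝ) + 1)⁻¹ * B + (T.dep v : ℝ)⁻¹ * ((T.dep v : ℝ) + 1)⁻¹ * (T.dep v * B) +
          ((T.dep v : ℝ) + 1)⁻¹ * (N * B) := by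
        rw [hdecomp]
        refine (norm_sub_le _ _).trans (add_le_add ((norm_add_le _ _).trans ?_) ?_)
        · rw [norm_smul, norm_smul]
          gcongr
          exacts [abs_one_sub_sqrt_div_sub_inv_le hn0.le, hB v, abs_inv_sqrt_mul_sub_inv_le hn0]
        · rw [norm_mul, norm_natCast_add_one_inv]
          gcongr
    _ = B * ((N + 2) * ((T.dep v : ℝ) + 1)⁻¹) := by
        field_simp
        ring

theorem norm_modelDefect_le (hN : 0 < N) (hB : ∀ v, ‖f v‖ ≤ B) (v : V) :
    ‖T.modelDefect N f v‖ ≤ B * ((N + 2) * ((T.dep v : ℝ) + 1)⁻¹) := by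
  obtain hv | hv := lt_or_ge (T.dep v) N
  · have hB0 : 0 ≤ B := (norm_nonneg _).trans (hB v)
    refine (norm_modelDefect_le_of_lt hB hv).trans ?_
    gcongr
    exact le_add_of_nonneg_right zero_le_two
  · exact norm_modelDefect_le_of_le hN hB hv

theorem exists_isCompactOperator_modelDefect {m : ℕ} (hm : ∀ n, (T.level n).encard ≤ m)
    (hN : 0 < N) :
    ∃ K : L2 V →L[ℂ] L2 V, IsCompactOperator K ∧ ∀ f v, K f v = T.modelDefect N f v := by
  let coordinates : L2 V →ₗ[ℂ] V → ℂ := LinearMap.pi fun v => lp.evalₗ (fun _ => ℂ) 2 v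
  refine exists_isCompactOperator_lp (p := 2) (by norm_num) (T.modelDefect N ∘ₗ coordinates)
    ((T.memℓp_inv_dep_add_one hm).const_mul (N + 2 : ℝ)) fun f v => ?_
  rw [Real.norm_of_nonneg (by positivity)]
  exact norm_modelDefect_le hN (fun u => lp.norm_apply_le_norm two_ne_zero f u) v

end Cesaro

end TreeData

theorem cesaro_essentially_subnormal_general {V : Type} (T : TreeData V)
    (hleaves : {u | T.chi u = ∅}.Finite) (m : ℕ) (hm : ∀ n : ℕ, (T.level n).encard ≤ m)
    (C : L2 V →L[ℂ] L2 V) (hC : ∀ (f : L2 V) (v : V), C f v = T.cesaro ⇑f v) :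
    ∃ K : L2 V →L[ℂ] L2 V, IsCompactOperator ⇑K ∧ IsSubnormal (C + K) := by
  obtain ⟨N, hN⟩ := Filter.eventually_atTop.1
    ((TreeData.eventually_bijOn_par hleaves hm).and (Filter.eventually_gt_atTop 0))
  have hpos : 0 < N := (hN N le_rfl).2
  obtain ⟨K, hK, hKf⟩ := TreeData.exists_isCompactOperator_modelDefect hm hpos
  have hmodel (f : L2 V) (v : V) : (1 - (C + K)) f v = T.isometricModel N f v := by
    change f v - (C f v + K f v) = _
    rw [hC, hKf, T.modelDefect_apply]
    ring
  have hisometry : ∀ f, ‖(1 - (C + K)) f‖ = ‖f‖ := TreeData.norm_map_of_eq_isometricModel hpos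
    (fun n hn => (hN n hn).1) (TreeData.finite_level hm) hmodel
  exact ⟨K, hK, by simpa using (isSubnormal_of_norm_map hisometry).one_sub⟩

/-- For a leafless, narrow rooted directed tree the bounded Cesàro operator
`C_T` is essentially equivalent to a subnormal operator: there is a compact operator `K` on
`ℓ²(V)` such that `C_T + K` is subnormal. -/
theorem cesaro_essentially_subnormal {V : Type} [Countable V] [Infinite V]
    (T : TreeData V)
    (hleafless : ∀ u : V, (T.chi u).Nonempty)
    (m : ℕ) (hm : ∀ n : ℕ, (T.level n).encard ≤ m)
    (C : L2 V →L[ℂ] L2 V) (hC : ∀ (f : L2 V) (v : V), C f v = T.cesaro ⇑f v) :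
    ∃ K : L2 V →L[ℂ] L2 V, IsCompactOperator ⇑K ∧ IsSubnormal (C + K) := by
  have hleaves : {u | T.chi u = ∅}.Finite :=
    Set.finite_empty.subset fun u hu => (hleafless u).ne_empty hu
  exact cesaro_essentially_subnormal_general T hleaves m hm C hC
end
end

section
/- Let T = (V, root, par) be a rooted directed tree and w ∈ V. Then Λ_T e_w belongs to ℓ²(V) if and only if Σ_{j=0}^{∞} card(Chi^⟨j⟩(w)) / (dep(w)+j+1)² < ∞, and in that case ‖Λ_T e_w‖² equals this sum, where Chi^⟨j⟩(w) = {v ∈ V : dep(v) = dep(w) + j and par^j(v) = w}. -/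
noncomputable section

open scoped ENNReal

/-- The `j`-fold iterated children set `Chi^⟨j⟩(w)`. -/
def TreeData.chiIter {V : Type} (T : TreeData V) (w : V) (j : ℕ) : Set V :=
  {v : V | T.dep v = T.dep w + j ∧ T.par^[j] v = w}

/-!
The ancestors of a vertex have pairwise distinct depths, so `w` occurs at most once among
`v, par v, …, root`, namely as `par^[j] v` when `v` lies `j` generations below `w`. Hence `Λ_T e_w`
takes the value `1 / (dep w + j + 1)` on `Chi^⟨j⟩(w)` and vanishes off the disjoint union of these
sets. Its `ℓ^p` norm is then computed by summing over the generations one at a time.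
-/

section PiecewiseConstantSums

theorem summable_const_iff_finite {β G : Type*} [AddCommGroup G] [TopologicalSpace G]
    [IsTopologicalAddGroup G] [T2Space G] {c : G} (hc : c ≠ 0) :
    Summable (fun _ : β => c) ↔ Finite β := by
  refine ⟨fun h => ?_, fun _ => .of_finite⟩
  by_contra hβ
  have : Infinite β := not_finite_iff_infinite.1 hβ
  exact hc ((summable_const_iff c).1 h)

variable {ι α : Type*} {s : ι → Set α}

theorem hasSum_sigma_iff_of_support_subset_iUnion {M : Type*} [AddCommMonoid M]
    [TopologicalSpace M] {f : α → M} {a : M} (hs : Pairwise (Function.onFun Disjoint s))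
    (hf : Function.support f ⊆ ⋃ i, s i) :
    HasSum (fun x : Σ i, s i => f x.2) a ↔ HasSum f a := by
  have h_inj : Function.Injective (fun x : Σ i, s i => (x.2 : α)) :=
    Subtype.val_injective.comp (Set.sigmaToiUnion_injective s hs)
  refine h_inj.hasSum_iff fun x hx => Function.notMem_support.1 fun hfx => hx ?_
  obtain ⟨i, hi⟩ := Set.mem_iUnion.1 (hf hfx)
  exact ⟨⟨i, x, hi⟩, rfl⟩

variable {f : α → ℝ} {c : ι → ℝ}

theorem tsum_coe_eq_ncard_mul {t : Set α} {b : ℝ} (h : ∀ a ∈ t, f a = b) :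
    ∑' a : t, f a = t.ncard * b := by
  rw [tsum_congr fun a : t => h a a.2, tsum_const, nsmul_eq_mul, Nat.card_coe_set_eq]

theorem summable_iff_summable_ncard_mul (hs : Pairwise (Function.onFun Disjoint s))
    (hf : Function.support f ⊆ ⋃ i, s i) (hfc : ∀ i, ∀ a ∈ s i, f a = c i) (hc : ∀ i, 0 < c i) :
    Summable f ↔ (∀ i, (s i).Finite) ∧ Summable fun i => (s i).ncard * c i := by
  have h_sigma : Summable (fun x : Σ i, s i => f x.2) ↔ Summable f :=
    exists_congr fun _ => hasSum_sigma_iff_of_support_subset_iUnion hs hf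
  have h_piece (i : ι) : Summable (fun a : s i => f a) ↔ (s i).Finite := by
    rw [summable_congr fun a : s i => hfc i a a.2, summable_const_iff_finite (hc i).ne',
      Set.finite_coe_iff]
  have h_nonneg (x : Σ i, s i) : 0 ≤ f x.2 := (hfc x.1 x.2 x.2.2).symm ▸ (hc x.1).le
  simp only [← h_sigma, summable_sigma_of_nonneg h_nonneg, h_piece, tsum_coe_eq_ncard_mul (hfc _)]

theorem tsum_eq_tsum_ncard_mul (hs : Pairwise (Function.onFun Disjoint s))
    (hf : Function.support f ⊆ ⋃ i, s i) (hfc : ∀ i, ∀ a ∈ s i, f a = c i) (h : Summable f) :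
    ∑' a, f a = ∑' i, (s i).ncard * c i := by
  have h_sigma : HasSum (fun x : Σ i, s i => f x.2) (∑' a, f a) :=
    (hasSum_sigma_iff_of_support_subset_iUnion hs hf).2 h.hasSum
  calc ∑' a, f a = ∑' x : Σ i, s i, f x.2 := h_sigma.tsum_eq.symm
    _ = ∑' i, ∑' a : s i, f a := h_sigma.summable.tsum_sigma
    _ = ∑' i, (s i).ncard * c i := tsum_congr fun i => tsum_coe_eq_ncard_mul (hfc i)

end PiecewiseConstantSums

namespace TreeData

variable {V : Type} (T : TreeData V)

theorem par_iterate_eq_root_iff {v : V} {n : ℕ} : T.par^[n] v = T.root ↔ T.dep v ≤ n := by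
  classical
  refine ⟨Nat.find_min' (T.hroot v), fun h => ?_⟩
  have h_dep : T.par^[T.dep v] v = T.root := Nat.find_spec (T.hroot v)
  rw [← Nat.sub_add_cancel h, Function.iterate_add_apply, h_dep,
    Function.iterate_fixed T.par_root]

theorem dep_par_iterate (v : V) (j : ℕ) : T.dep (T.par^[j] v) = T.dep v - j :=
  eq_of_forall_ge_iff fun n => by
    rw [← T.par_iterate_eq_root_iff, ← Function.iterate_add_apply, T.par_iterate_eq_root_iff,
      tsub_le_iff_right]

variable {T}

theorem mem_chiIter_iff_par_iterate_eq {v w : V} {j : ℕ} (hj : j ≤ T.dep v) :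
    v ∈ T.chiIter w j ↔ T.par^[j] v = w := by
  refine ⟨And.right, fun h => ⟨?_, h⟩⟩
  rw [← h, T.dep_par_iterate, Nat.sub_add_cancel hj]

theorem eq_of_mem_chiIter {v w : V} {i j : ℕ} (hi : v ∈ T.chiIter w i) (hj : v ∈ T.chiIter w j) :
    i = j :=
  Nat.add_left_cancel (hi.1.symm.trans hj.1)

variable (T) in
theorem pairwise_disjoint_chiIter (w : V) : Pairwise (Function.onFun Disjoint (T.chiIter w)) :=
  fun _ _ hij => Set.disjoint_left.2 fun _ hi hj => hij (eq_of_mem_chiIter hi hj)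

variable [DecidableEq V]

theorem cesaro_single_of_mem_chiIter {v w : V} {j : ℕ} (hv : v ∈ T.chiIter w j) (a : ℂ) :
    T.cesaro (Pi.single w a) v = ((T.dep w + j + 1 : ℕ) : ℂ)⁻¹ * a := by
  have hj : j ∈ Finset.range (T.dep v + 1) :=
    Finset.mem_range_succ_iff.2 (hv.1 ▸ Nat.le_add_left j _)
  have h_ne : ∀ i ∈ Finset.range (T.dep v + 1), i ≠ j → T.par^[i] v ≠ w := fun i hi hij h =>
    hij (eq_of_mem_chiIter
      ((mem_chiIter_iff_par_iterate_eq (Finset.mem_range_succ_iff.1 hi)).2 h) hv)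
  rw [cesaro, Finset.sum_eq_single_of_mem j hj fun i hi hij =>
    Pi.single_eq_of_ne (M := fun _ => ℂ) (h_ne i hi hij) a, hv.2, Pi.single_eq_same, hv.1,
    Nat.cast_succ]

theorem cesaro_single_of_notMem_iUnion_chiIter {v w : V} (hv : v ∉ ⋃ j, T.chiIter w j) (a : ℂ) :
    T.cesaro (Pi.single w a) v = 0 := by
  have h_ne : ∀ i ∈ Finset.range (T.dep v + 1), T.par^[i] v ≠ w := fun i hi h =>
    hv (Set.mem_iUnion.2
      ⟨i, (mem_chiIter_iff_par_iterate_eq (Finset.mem_range_succ_iff.1 hi)).2 h⟩)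
  rw [cesaro, Finset.sum_eq_zero fun i hi =>
    Pi.single_eq_of_ne (M := fun _ => ℂ) (h_ne i hi) a, mul_zero]

theorem norm_cesaro_single_rpow_of_mem_chiIter {v w : V} {j : ℕ} (hv : v ∈ T.chiIter w j)
    (r : ℝ) :
    ‖T.cesaro (Pi.single w 1) v‖ ^ r = (((T.dep w : ℝ) + j + 1) ^ r)⁻¹ := by
  rw [cesaro_single_of_mem_chiIter hv, mul_one, norm_inv, Complex.norm_natCast,
    Real.inv_rpow (Nat.cast_nonneg _)]
  push_cast
  rfl

variable (T) in
theorem support_norm_cesaro_single_rpow_subset (w : V) {r : ℝ} (hr : r ≠ 0) :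
    Function.support (fun v => ‖T.cesaro (Pi.single w 1) v‖ ^ r) ⊆ ⋃ j, T.chiIter w j :=
  Function.support_subset_iff'.2 fun v hv => by
    rw [cesaro_single_of_notMem_iUnion_chiIter hv, norm_zero, Real.zero_rpow hr]

end TreeData

theorem cesaro_single_memℓp_iff_general {V : Type} [DecidableEq V] (T : TreeData V) (w : V)
    {p : ℝ≥0∞} (hp : 0 < p.toReal) :
    (Memℓp (T.cesaro ⇑(lp.single p w (1 : ℂ) : lp (fun _ : V => ℂ) p)) p ↔
      (∀ j : ℕ, (T.chiIter w j).Finite) ∧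
        Summable (fun j : ℕ =>
          ((T.chiIter w j).ncard : ℝ) / ((T.dep w : ℝ) + j + 1) ^ p.toReal)) ∧
    ∀ h : Memℓp (T.cesaro ⇑(lp.single p w (1 : ℂ) : lp (fun _ : V => ℂ) p)) p,
      ‖(⟨T.cesaro ⇑(lp.single p w (1 : ℂ) : lp (fun _ : V => ℂ) p), h⟩ :
          lp (fun _ : V => ℂ) p)‖ ^ p.toReal
        = ∑' j : ℕ, ((T.chiIter w j).ncard : ℝ) / ((T.dep w : ℝ) + j + 1) ^ p.toReal := by
  have h_disj := T.pairwise_disjoint_chiIter w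
  have h_supp := T.support_norm_cesaro_single_rpow_subset w hp.ne'
  have h_val (j : ℕ) (v : V) (hv : v ∈ T.chiIter w j) :=
    TreeData.norm_cesaro_single_rpow_of_mem_chiIter hv p.toReal
  simp only [lp.coeFn_single, div_eq_mul_inv]
  refine ⟨?_, fun h => ?_⟩
  · rw [memℓp_gen_iff hp]
    exact summable_iff_summable_ncard_mul h_disj h_supp h_val fun j => by positivity
  · rw [lp.norm_rpow_eq_tsum hp]
    exact tsum_eq_tsum_ncard_mul h_disj h_supp h_val ((memℓp_gen_iff hp).1 h)

/-- For a vertex `w` of a rooted directed tree, `Λ_T e_w ∈ ℓ²(V)` if and only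
if `Σ_j card(Chi^⟨j⟩(w))/(dep w + j + 1)² < ∞`, and in that case `‖Λ_T e_w‖²` equals this sum. -/
theorem cesaro_single_memℓp_iff {V : Type} [Countable V] [Infinite V] [DecidableEq V]
    (T : TreeData V) (w : V) :
    (Memℓp (T.cesaro ⇑(lp.single 2 w (1 : ℂ) : L2 V)) 2 ↔
      (∀ j : ℕ, (T.chiIter w j).Finite) ∧
        Summable (fun j : ℕ => ((T.chiIter w j).ncard : ℝ) / ((T.dep w : ℝ) + j + 1) ^ 2)) ∧
    ∀ h : Memℓp (T.cesaro ⇑(lp.single 2 w (1 : ℂ) : L2 V)) 2,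
      ‖(⟨T.cesaro ⇑(lp.single 2 w (1 : ℂ) : L2 V), h⟩ : L2 V)‖ ^ 2
        = ∑' j : ℕ, ((T.chiIter w j).ncard : ℝ) / ((T.dep w : ℝ) + j + 1) ^ 2 := by
  simpa only [ENNReal.toReal_ofNat, Real.rpow_ofNat] using
    cesaro_single_memℓp_iff_general T w (p := 2) (by norm_num)
end
end
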